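/- Every arithmetic expression ends with exactly one of the four operators +, −, ×, ÷; that is, the set 𝒜 of arithmetic expressions is the disjoint union 𝒜 = 𝒜(+) ⊍ 𝒜(−) ⊍ 𝒜(×) ⊍ 𝒜(÷). -/

import Mathlib

/- Common framework: `K = ℝ(x₁,x₂,…)` is the field of rational functions over `ℝ` in
countably many variables (the fraction field of `MvPolynomial ℕ ℝ`), arithmetic
expressions, the permutation action, isomorphism, types, the `EndsWith` classification,
multilinear forms and monicity, isomorphism classes and their counting. -/

open MvPolynomial

noncomputable section

abbrev P : Type := MvPolynomial ℕ ℝ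
abbrev K : Type := FractionRing P

def toK : P →+* K := algebraMap P K

/-- The variable `xᵢ`, as an element of `K`. -/
def Xv (i : ℕ) : K := toK (X i)

/-- `Vars f` : the set of variables on which `f` depends, i.e. the variables occurring in a
representation of `f` as a quotient of two coprime polynomials. -/
def Vars (f : K) : Set ℕ :=
  {i | ∃ p q : P, q ≠ 0 ∧ IsRelPrime p q ∧ f = toK p / toK q ∧ (i ∈ p.vars ∨ i ∈ q.vars)}

/-- `𝒜` : the smallest subset of `K` containing every variable and closed under the four
binary operations applied to expressions with disjoint variable sets. -/
inductive IsAE : K → Prop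
  | var (i : ℕ) : IsAE (Xv i)
  | add {g h : K} : IsAE g → IsAE h → Disjoint (Vars g) (Vars h) → IsAE (g + h)
  | sub {g h : K} : IsAE g → IsAE h → Disjoint (Vars g) (Vars h) → IsAE (g - h)
  | mul {g h : K} : IsAE g → IsAE h → Disjoint (Vars g) (Vars h) → IsAE (g * h)
  | div {g h : K} : IsAE g → IsAE h → Disjoint (Vars g) (Vars h) → IsAE (g / h)

/-- The action `σ·f` of a permutation of the variables on `K`, substituting `σ(xᵢ)` for `xᵢ`. -/
def permAct (σ : Equiv.Perm ℕ) : K ≃+* K :=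
  IsFractionRing.ringEquivOfRingEquiv (renameEquiv ℝ σ).toRingEquiv

/-- `f ≅ g` : `f` and `g` are isomorphic, i.e. differ by a permutation of the variables. -/
def Iso (f g : K) : Prop := ∃ σ : Equiv.Perm ℕ, permAct σ f = g

/-- First type: `-f ∉ 𝒜`. -/
def FirstType (f : K) : Prop := IsAE f ∧ ¬ IsAE (-f)

/-- Second type: `-f ∈ 𝒜` but `f ≇ -f`. -/
def SecondType (f : K) : Prop := IsAE f ∧ IsAE (-f) ∧ ¬ Iso f (-f)

/-- Third type: `-f ∈ 𝒜` and `f ≅ -f`. -/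
def ThirdType (f : K) : Prop := IsAE f ∧ IsAE (-f) ∧ Iso f (-f)

/-- The four binary operators. -/
inductive Op : Type
  | add | sub | mul | div
deriving DecidableEq

/-- `EndsWith f o` : the arithmetic expression `f` ends with the operator `o`. -/
inductive EndsWith : K → Op → Prop
  | var (i : ℕ) : EndsWith (Xv i) Op.mul
  | add_base {i j : ℕ} (hij : i ≠ j) : EndsWith (Xv i + Xv j) Op.add
  | sub_base {i j : ℕ} (hij : i ≠ j) : EndsWith (Xv i - Xv j) Op.sub
  | mul_base {i j : ℕ} (hij : i ≠ j) : EndsWith (Xv i * Xv j) Op.mul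
  | div_base {i j : ℕ} (hij : i ≠ j) : EndsWith (Xv i / Xv j) Op.div
  | add_rec {g h : K} {o₁ o₂ : Op} : IsAE g → IsAE h → Disjoint (Vars g) (Vars h) →
      3 ≤ (Vars (g + h)).ncard → o₁ ≠ Op.sub → o₂ ≠ Op.sub →
      EndsWith g o₁ → EndsWith h o₂ → EndsWith (g + h) Op.add
  | mul_rec {g h : K} {o₁ o₂ : Op} : IsAE g → IsAE h → Disjoint (Vars g) (Vars h) →
      3 ≤ (Vars (g * h)).ncard → o₁ ≠ Op.div → o₂ ≠ Op.div →
      EndsWith g o₁ → EndsWith h o₂ → EndsWith (g * h) Op.mul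
  | div_rec {g h : K} {o₁ o₂ : Op} : IsAE g → IsAE h → Disjoint (Vars g) (Vars h) →
      3 ≤ (Vars (g / h)).ncard → o₁ ≠ Op.div → o₂ ≠ Op.div →
      EndsWith g o₁ → EndsWith h o₂ → EndsWith (g / h) Op.div
  | sub_rec {g h : K} {o₁ o₂ : Op} : IsAE g → IsAE h → Disjoint (Vars g) (Vars h) →
      3 ≤ (Vars (g - h)).ncard → o₁ ≠ Op.sub → o₂ ≠ Op.sub → FirstType h →
      EndsWith g o₁ → EndsWith h o₂ → EndsWith (g - h) Op.sub

/-- `f` ends with one of the operators in `s`. -/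
def EndsIn (f : K) (s : Set Op) : Prop := ∃ o ∈ s, EndsWith f o

/-- The binary operation on `K` corresponding to an operator. -/
def applyOp (o : Op) (a b : K) : K :=
  match o with
  | Op.add => a + b
  | Op.sub => a - b
  | Op.mul => a * b
  | Op.div => a / b

/-- The variable index set `{1, …, n}` (for the variables `x₁, …, xₙ`). -/
def varsUpTo (n : ℕ) : Set ℕ := {i | 1 ≤ i ∧ i ≤ n}

/-- `𝒜ₙ` : arithmetic expressions whose variable set is exactly `{x₁, …, xₙ}`. -/
def AEn (n : ℕ) : Set K := {f | IsAE f ∧ Vars f = varsUpTo n}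

/-- A multilinear polynomial: degree at most `1` in each variable. -/
def Multilinear (p : P) : Prop := ∀ i : ℕ, p.degreeOf i ≤ 1

/-- The key of a (multilinear) monomial: the sorted list of variables occurring in it;
keys are compared in the lexicographic order on lists. -/
def monKey (m : ℕ →₀ ℕ) : List ℕ := m.support.sort (· ≤ ·)

/-- A (multilinear) polynomial is monic if the coefficient of its lexicographically
leading (i.e. first) monomial is positive. -/
def MonicML (p : P) : Prop :=
  ∃ m ∈ p.support, 0 < p.coeff m ∧ ∀ m' ∈ p.support, monKey m ≤ monKey m'

/-- `MLForm f F₁ F₂` : `F₁ / F₂` is the multilinear form of `f`: `F₁, F₂` are coprime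
multilinear polynomials, `F₂` is monic, and `f = F₁ / F₂`. -/
def MLForm (f : K) (F₁ F₂ : P) : Prop :=
  Multilinear F₁ ∧ Multilinear F₂ ∧ IsRelPrime F₁ F₂ ∧ F₂ ≠ 0 ∧ MonicML F₂ ∧
    f = toK F₁ / toK F₂

/-- A monic arithmetic expression: the numerator of its multilinear form is monic as well. -/
def MonicAE (f : K) : Prop := ∃ F₁ F₂ : P, MLForm f F₁ F₂ ∧ MonicML F₁

/-- The isomorphism class of `f`. -/
def classOf (f : K) : Set K := {g | Iso f g}

/-- `S̄` : the set of isomorphism classes of elements of `S`. -/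
def classes (S : Set K) : Set (Set K) := classOf '' S

/-- `|S̄|` : the number of isomorphism classes of elements of `S`. -/
def countClasses (S : Set K) : ℕ := (classes S).ncard

/-- The number of isomorphism classes of elements of `S` depending on exactly `k` variables. -/
def gradeCount (S : Set K) (k : ℕ) : ℕ := countClasses {f ∈ S | (Vars f).ncard = k}

/-- `ω_n` for a graded family having `N k` elements in grade `k` : the sum over all
partitions `(k₁^{m₁},…,k_s^{m_s})` of `n` of `∏ⱼ C(N kⱼ + mⱼ - 1, mⱼ)`. -/
def omega (N : ℕ → ℕ) (n : ℕ) : ℕ :=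
  ∑ p : n.Partition,
    ∏ k ∈ p.parts.toFinset, Nat.choose (N k + p.parts.count k - 1) (p.parts.count k)

/-- `ω_n′` : the same sum restricted to non-trivial partitions, i.e. `ω_n - N n`. -/
def omega' (N : ℕ → ℕ) (n : ℕ) : ℕ := omega N n - N n

/-- `𝒜(s)` : arithmetic expressions ending with one of the operators in `s`. -/
def Aset (s : Set Op) : Set K := {f | IsAE f ∧ EndsIn f s}

/-- `ℱ(s)` : first-type arithmetic expressions ending with one of the operators in `s`. -/
def Fset (s : Set Op) : Set K := {f | FirstType f ∧ EndsIn f s}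

/-- `ℬ(s)` : second-type arithmetic expressions ending with one of the operators in `s`. -/
def Bset (s : Set Op) : Set K := {f | SecondType f ∧ EndsIn f s}

/-- `𝒞(s)` : third-type arithmetic expressions ending with one of the operators in `s`. -/
def Cset (s : Set Op) : Set K := {f | ThirdType f ∧ EndsIn f s}

/-- `ℳℬ(s)` : monic second-type arithmetic expressions ending with an operator in `s`. -/
def MBset (s : Set Op) : Set K := {f | SecondType f ∧ MonicAE f ∧ EndsIn f s}

/-!
A rational function `f` has two closed one-forms, `df` and `df / f`. If `f` ends with `+` or `-`,
then `df` splits as a sum of nonzero one-forms in disjoint sets of variables; if `f` ends with `×`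
or `÷` and is not a variable, then `df / f` does. Both cannot happen: some `i`, `j` would be
separated by both splittings, so that `∂ᵢ∂ⱼf = 0` and `∂ᵢ∂ⱼ(log f) = 0`, whereas
`∂ᵢ∂ⱼ(log f) = ∂ᵢ∂ⱼf / f - (∂ᵢf / f) (∂ⱼf / f)` with `∂ᵢf` and `∂ⱼf` nonzero.

An expression not ending with `-` is a sum of terms, each a variable or ending with `×` or `÷`. The
differentials of the terms are unsplittable, so each is determined by `df` and any one of its
variables. If `f = g - h` also ends with `-`, a term `t` of `h` thus meets a term `u` of `f` with
`du = -dt`, and comparing mixed derivatives upgrades this to `u = -t`. Then the sign of `t`, and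
with it the sign of `h`, can be changed inside `𝒜`, although `h` is of the first type. The same
argument for `df / f` separates `÷` from the other operators: there the factors have splitting
differentials, and for those `du / u = -dt / t` is impossible.

Conversely, every expression is a difference of sums and a quotient of products; these normal
forms are stable under the four operations, which yields an ending operator.
-/

section Localization

variable {R A B M : Type*} [CommRing R] [CommRing A] [CommRing B] [Algebra R A] [Algebra R B]
  [Algebra A B] [IsScalarTower R A B] [AddCommGroup M] [Module R M] [Module A M] [Module B M]
  [IsScalarTower R A M] [IsScalarTower A B M] [IsScalarTower R B M]

/-- The extension of a derivation of `A` to a formally étale `A`-algebra `B`, such as a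
localization of `A`. -/
def etaleExtension [Algebra.FormallyEtale A B] (d : Derivation R A M) : Derivation R B M :=
  (d.liftKaehlerDifferential.liftBaseChange B ∘ₗ
    (KaehlerDifferential.tensorKaehlerEquivOfFormallyEtale R A B).symm.toLinearMap).compDer
    (KaehlerDifferential.D R B)

lemma etaleExtension_algebraMap [Algebra.FormallyEtale A B] (d : Derivation R A M) (a : A) :
    etaleExtension d (algebraMap A B a) = d a := by
  simp [etaleExtension,
    KaehlerDifferential.tensorKaehlerEquivOfFormallyEtale_symm_D_algebraMap]

end Localization

lemma derivation_ext_of_isFractionRing {R A F M : Type*} [CommRing R] [CommRing A] [Field F]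
    [Algebra R F] [Algebra A F] [IsFractionRing A F] [AddCommGroup M] [Module R M] [Module F M]
    {d₁ d₂ : Derivation R F M}
    (h : ∀ a : A, d₁ (algebraMap A F a) = d₂ (algebraMap A F a)) : d₁ = d₂ := by
  ext f
  obtain ⟨a, b, -, rfl⟩ := IsFractionRing.div_surjective (A := A) f
  simp only [Derivation.leibniz_div, h]

section PartialDerivatives

variable {σ R : Type*} [CommRing R] {i : σ} {p q : MvPolynomial σ R}

lemma degreeOf_pderiv_lt (hi : i ∈ p.vars) : degreeOf i (pderiv i p) < degreeOf i p := by
  rw [degreeOf_lt_iff (Nat.pos_of_ne_zero (mem_vars_iff_degreeOf_ne_zero.1 hi))]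
  intro m hm
  rw [mem_support_iff, coeff_pderiv] at hm
  have hle := monomial_le_degreeOf i (mem_support_iff.2 (left_ne_zero_of_mul hm))
  simpa [Nat.succ_le_iff] using hle

lemma pderiv_eq_zero_iff [NoZeroDivisors R] [CharZero R] : pderiv i p = 0 ↔ i ∉ p.vars := by
  refine ⟨fun h hi => ?_, pderiv_eq_zero_of_notMem_vars⟩
  obtain ⟨m, hm, him⟩ := (mem_vars_iff_mem_support i).1 hi
  have hcoeff := coeff_pderiv (i := i) p (m - Finsupp.single i 1)
  rw [tsub_add_cancel_of_le (Finsupp.single_le_iff.2 (Finsupp.mem_support_iff.1 him).bot_lt), h,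
    coeff_zero] at hcoeff
  exact mul_ne_zero (mem_support_iff.1 hm) (Nat.cast_add_one_ne_zero _) hcoeff.symm

lemma pderiv_eq_zero_of_dvd [NoZeroDivisors R] (hpq : p ∣ pderiv i p) : pderiv i p = 0 := by
  by_contra hne
  obtain ⟨r, hr⟩ := hpq
  have hp : p ≠ 0 := by rintro rfl; simp at hne
  have hr0 : r ≠ 0 := by rintro rfl; simp [hr] at hne
  have hlt := degreeOf_pderiv_lt (not_imp_comm.1 pderiv_eq_zero_of_notMem_vars hne)
  rw [hr, degreeOf_mul_eq hp hr0] at hlt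
  omega

lemma notMem_vars_of_pderiv_mul_eq [IsDomain R] [UniqueFactorizationMonoid R] [CharZero R]
    (hq : q ≠ 0) (hpq : IsRelPrime p q) (h : pderiv i p * q = p * pderiv i q) :
    i ∉ p.vars ∧ i ∉ q.vars := by
  have hq' : pderiv i q = 0 :=
    pderiv_eq_zero_of_dvd (hpq.symm.dvd_of_dvd_mul_left (h ▸ dvd_mul_left q _))
  have hp' : pderiv i p = 0 := by simpa [hq', hq] using h
  exact ⟨pderiv_eq_zero_iff.1 hp', pderiv_eq_zero_iff.1 hq'⟩

lemma pderiv_pderiv_comm (i j : σ) (p : MvPolynomial σ R) :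
    pderiv i (pderiv j p) = pderiv j (pderiv i p) := by
  classical
  let d (k : σ) : Derivation R (MvPolynomial σ R) (MvPolynomial σ R) := pderiv k
  have hd : ⁅d i, d j⁆ = 0 := derivation_ext fun k => by
    simp [d, Derivation.commutator_apply, pderiv_X, Pi.single_apply, apply_ite]
  exact sub_eq_zero.1 (DFunLike.congr_fun hd p)

end PartialDerivatives

section FunctionSupport

variable {ι M : Type*} [AddZeroClass M] {α β γ : ι → M}

lemma support_add_of_disjoint (h : Disjoint (Function.support α) (Function.support β)) :
    Function.support (α + β) = Function.support α ∪ Function.support β := by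
  ext i
  have : i ∈ Function.support α → i ∉ Function.support β := fun hi =>
    Set.disjoint_left.1 h hi
  simp only [Function.mem_support, Set.mem_union, Pi.add_apply, not_not] at this ⊢
  by_cases hi : α i = 0 <;> simp_all

lemma eqOn_add_left_of_disjoint (hαγ : Set.EqOn α γ (Function.support γ))
    (h : Disjoint (Function.support α) (Function.support β)) :
    Set.EqOn (α + β) γ (Function.support γ) := by
  intro i hi
  have hα : i ∈ Function.support α := by rwa [Function.mem_support, hαγ hi]
  rw [Pi.add_apply, Function.notMem_support.1 (Set.disjoint_left.1 h hα), add_zero, hαγ hi]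

end FunctionSupport

lemma ssubset_union_right_of_disjoint {α : Type*} {s t : Set α} (hst : Disjoint s t)
    (hs : s.Nonempty) : t ⊂ s ∪ t :=
  Set.ssubset_union_right_iff.2 fun hsub => hs.ne_empty (hst.eq_bot_of_le hsub)

lemma exists_separated_by_both {ι : Type*} {S U V : Set ι}
    (hU : (S ∩ U).Nonempty) (hU' : (S \ U).Nonempty)
    (hV : (S ∩ V).Nonempty) (hV' : (S \ V).Nonempty) :
    ∃ i ∈ S ∩ U, ∃ j ∈ S \ U, ¬(i ∈ V ↔ j ∈ V) := by
  by_contra! hall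
  obtain ⟨i, hi⟩ := hU
  obtain ⟨j, hj⟩ := hU'
  have hconst : ∀ k ∈ S, (k ∈ V ↔ j ∈ V) := fun k hk => by
    by_cases hkU : k ∈ U
    · exact hall k ⟨hk, hkU⟩ j hj
    · exact (hall i hi k ⟨hk, hkU⟩).symm.trans (hall i hi j hj)
  obtain ⟨k, hkS, hkV⟩ := hV
  obtain ⟨l, hlS, hlV⟩ := hV'
  exact hlV ((hconst l hlS).2 ((hconst k hkS).1 hkV))

section OneForms

variable {ι R A : Type*} [CommRing R] [CommRing A] [Algebra R A] {D : ι → Derivation R A A}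
  {ω α β γ η : ι → A}

variable (D) in
/-- A family `ω`, thought of as the one-form `∑ ω i dxᵢ` on a space with partial derivatives
`D i = ∂/∂xᵢ`, is closed. -/
def IsClosedForm (ω : ι → A) : Prop := ∀ i j, D i (ω j) = D j (ω i)

variable (D) in
/-- A closed one-form `ω` splits if it is a sum of two nonzero one-forms in disjoint sets of
variables: the mixed partial derivatives across some cut of the support of `ω` vanish. -/
def IsSplitForm (ω : ι → A) : Prop :=
  ∃ U : Set ι, (Function.support ω ∩ U).Nonempty ∧ (Function.support ω \ U).Nonempty ∧
    ∀ i ∈ U, ∀ j ∉ U, D i (ω j) = 0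

lemma IsClosedForm.neg (hω : IsClosedForm D ω) : IsClosedForm D (-ω) := fun i j => by
  simp [hω i j]

lemma isSplitForm_neg : IsSplitForm D (-ω) ↔ IsSplitForm D ω := by
  simp [IsSplitForm]

lemma IsSplitForm.nontrivial_support (hω : IsSplitForm D ω) :
    (Function.support ω).Nontrivial := by
  obtain ⟨U, ⟨i, hi, hiU⟩, ⟨j, hj, hjU⟩, -⟩ := hω
  exact ⟨i, hi, j, hj, fun hij => hjU (hij ▸ hiU)⟩

lemma IsClosedForm.isSplitForm_add (hβ : IsClosedForm D β)
    (h : Disjoint (Function.support α) (Function.support β))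
    (hα₀ : (Function.support α).Nonempty) (hβ₀ : (Function.support β).Nonempty) :
    IsSplitForm D (α + β) := by
  refine ⟨Function.support α, ?_, ?_, fun i hi j hj => ?_⟩
  · rwa [support_add_of_disjoint h, Set.union_inter_cancel_left]
  · rwa [support_add_of_disjoint h, Set.union_sdiff_cancel_left h.inter_eq.subset]
  · rw [Pi.add_apply, Function.notMem_support.1 hj, zero_add, hβ i j,
      Function.notMem_support.1 (Set.disjoint_left.1 h hi), map_zero]

lemma IsSplitForm.exists_common_zero (hα : IsSplitForm D α) (hβ : IsSplitForm D β)
    (hβc : IsClosedForm D β) (h : Function.support α = Function.support β) :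
    ∃ i ∈ Function.support α, ∃ j ∈ Function.support α, D i (α j) = 0 ∧ D i (β j) = 0 := by
  obtain ⟨U, hU, hU', hUα⟩ := hα
  obtain ⟨V, hV, hV', hVβ⟩ := hβ
  obtain ⟨i, hi, j, hj, hij⟩ := exists_separated_by_both hU hU' (h ▸ hV) (h ▸ hV')
  refine ⟨i, hi.1, j, hj.1, hUα i hi.2 j hj.2, ?_⟩
  by_cases hiV : i ∈ V
  · exact hVβ i hiV j fun hjV => hij (iff_of_true hiV hjV)
  · exact (hβc i j).trans (hVβ j (by tauto) i hiV)

lemma IsClosedForm.support_subset_of_eqOn (hω : IsClosedForm D ω) (hβ : IsClosedForm D β)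
    (hαs : ¬IsSplitForm D α)
    (hωα : Set.EqOn ω α (Function.support α)) (hωβ : Set.EqOn ω β (Function.support β))
    (h : (Function.support α ∩ Function.support β).Nonempty) :
    Function.support α ⊆ Function.support β := by
  by_contra hsub
  refine hαs ⟨Function.support β, h, Set.sdiff_nonempty.2 hsub, fun i hi j hj => ?_⟩
  by_cases hjα : j ∈ Function.support α
  · calc
      D i (α j) = D i (ω j) := by rw [hωα hjα]
      _ = D j (ω i) := hω i j
      _ = D j (β i) := by rw [hωβ hi]
      _ = D i (β j) := hβ j i
      _ = 0 := by rw [Function.notMem_support.1 hj, map_zero]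
  · rw [Function.notMem_support.1 hjα, map_zero]

/-- The unsplittable pieces of a closed one-form in disjoint sets of variables are determined by
any one of their variables. -/
lemma IsClosedForm.eq_of_eqOn_support (hω : IsClosedForm D ω) (hα : IsClosedForm D α)
    (hβ : IsClosedForm D β) (hαs : ¬IsSplitForm D α) (hβs : ¬IsSplitForm D β)
    (hωα : Set.EqOn ω α (Function.support α)) (hωβ : Set.EqOn ω β (Function.support β))
    (h : (Function.support α ∩ Function.support β).Nonempty) : α = β := by
  have hsupp : Function.support α = Function.support β :=
    (hω.support_subset_of_eqOn hβ hαs hωα hωβ h).antisymm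
      (hω.support_subset_of_eqOn hα hβs hωβ hωα (Set.inter_comm _ _ ▸ h))
  ext i
  by_cases hi : i ∈ Function.support α
  · rw [← hωα hi, hωβ (hsupp ▸ hi)]
  · rw [Function.notMem_support.1 hi,
      Function.notMem_support.1 (hsupp ▸ hi : i ∉ Function.support β)]

lemma IsClosedForm.eq_neg_of_eqOn_support (hω : IsClosedForm D (γ + -η))
    (hα : IsClosedForm D α) (hβ : IsClosedForm D β) (hαs : ¬IsSplitForm D α)
    (hβs : ¬IsSplitForm D β) (hωα : Set.EqOn (γ + -η) α (Function.support α))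
    (hηβ : Set.EqOn η β (Function.support β))
    (hγη : Disjoint (Function.support γ) (Function.support η))
    (h : (Function.support α ∩ Function.support β).Nonempty) : α = -β := by
  have hωβ : Set.EqOn (γ + -η) (-β) (Function.support (-β)) := by
    rw [← Function.support_neg η] at hγη
    rw [add_comm]
    refine eqOn_add_left_of_disjoint ?_ hγη.symm
    rw [Function.support_neg]
    exact hηβ.comp_left (g := Neg.neg)
  exact hω.eq_of_eqOn_support hα hβ.neg hαs (isSplitForm_neg.not.2 hβs) hωα hωβ
    (by rwa [Function.support_neg])

end OneForms

section Differentials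

variable {ι R F : Type*} [CommRing R] [Field F] [Algebra R F] (D : ι → Derivation R F F)
  {f g : F}

/-- The differential `df`, as the family of the partial derivatives of `f`. -/
def differential (f : F) : ι → F := fun i => D i f

/-- The logarithmic differential `df / f`, with value `0` at `f = 0`. -/
def logDifferential (f : F) : ι → F := fun i => D i f / f

lemma differential_zero : differential D 0 = 0 := by ext; simp [differential]

lemma differential_neg : differential D (-f) = -differential D f := by
  ext; simp [differential]

lemma differential_add : differential D (f + g) = differential D f + differential D g := by
  ext; simp [differential]

lemma differential_sub : differential D (f - g) = differential D f + -differential D g := by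
  ext; simp [differential, sub_eq_add_neg]

lemma logDifferential_mul (hf : f ≠ 0) (hg : g ≠ 0) :
    logDifferential D (f * g) = logDifferential D f + logDifferential D g := by
  ext i
  simp only [logDifferential, Derivation.leibniz, smul_eq_mul, Pi.add_apply]
  field_simp
  ring

lemma logDifferential_div (hf : f ≠ 0) (hg : g ≠ 0) :
    logDifferential D (f / g) = logDifferential D f + -logDifferential D g := by
  ext i
  simp only [logDifferential, Derivation.leibniz_div, smul_eq_mul, Pi.add_apply, Pi.neg_apply]
  field_simp
  ring

lemma support_logDifferential :
    Function.support (logDifferential D f) = Function.support (differential D f) := by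
  ext i
  simp only [logDifferential, differential, Function.mem_support, ne_eq, div_eq_zero_iff, not_or,
    and_iff_left_iff_imp]
  rintro hi rfl
  exact hi (map_zero (D i))

lemma derivation_logDifferential (i j : ι) :
    D i (logDifferential D f j) =
      D i (differential D f j) / f - logDifferential D f i * logDifferential D f j := by
  rcases eq_or_ne f 0 with rfl | hf
  · simp [logDifferential]
  · simp only [logDifferential, differential, Derivation.leibniz_div, smul_eq_mul]
    field_simp

variable {D}

lemma isClosedForm_differential (hD : ∀ i j, ⁅D i, D j⁆ = 0) :
    IsClosedForm D (differential D f) :=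
  fun i j => by
  simpa [differential, Derivation.commutator_apply, sub_eq_zero] using
    DFunLike.congr_fun (hD i j) f

lemma isClosedForm_logDifferential (hD : ∀ i j, ⁅D i, D j⁆ = 0) :
    IsClosedForm D (logDifferential D f) := fun i j => by
  rw [derivation_logDifferential, derivation_logDifferential, isClosedForm_differential hD i j,
    mul_comm]

lemma IsSplitForm.not_isSplitForm_logDifferential (hD : ∀ i j, ⁅D i, D j⁆ = 0)
    (hf : IsSplitForm D (differential D f)) : ¬IsSplitForm D (logDifferential D f) := by
  intro hf'
  obtain ⟨i, hi, j, hj, hij, hij'⟩ := hf.exists_common_zero hf' (isClosedForm_logDifferential hD)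
    (support_logDifferential D).symm
  rw [derivation_logDifferential, hij, zero_div, zero_sub, neg_eq_zero, mul_eq_zero] at hij'
  rw [← support_logDifferential] at hi hj
  exact hij'.elim hi hj

lemma IsSplitForm.logDifferential_ne_neg [NeZero (2 : F)] (hD : ∀ i j, ⁅D i, D j⁆ = 0)
    (hf : IsSplitForm D (differential D f)) (hg : IsSplitForm D (differential D g)) :
    logDifferential D f ≠ -logDifferential D g := by
  intro hfg
  obtain ⟨i, hi, j, hj, hfij, hgij⟩ := hf.exists_common_zero hg (isClosedForm_differential hD)
    (by rw [← support_logDifferential, hfg, Function.support_neg, support_logDifferential])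
  have hDf := derivation_logDifferential D (f := f) i j
  have hDg := derivation_logDifferential D (f := g) i j
  have hsum : 2 * (logDifferential D f i * logDifferential D f j) = 0 := by
    rw [hfij, hfg, Pi.neg_apply, Pi.neg_apply, map_neg, hDg, hgij] at hDf
    rw [hfg, Pi.neg_apply, Pi.neg_apply]
    linear_combination hDf
  rw [← support_logDifferential] at hi hj
  exact mul_ne_zero two_ne_zero (mul_ne_zero hi hj) hsum

lemma IsSplitForm.eq_neg_of_differential_eq_neg (hD : ∀ i j, ⁅D i, D j⁆ = 0)
    (hf : IsSplitForm D (logDifferential D f)) (hg : IsSplitForm D (logDifferential D g))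
    (hfg : differential D f = -differential D g) : f = -g := by
  obtain ⟨i, hi, j, hj, hfij, hgij⟩ := hf.exists_common_zero hg (isClosedForm_logDifferential hD)
    (by rw [support_logDifferential, hfg, Function.support_neg, support_logDifferential])
  have hDf (k : ι) : D k f = -D k g := congrFun hfg k
  obtain ⟨hgi, hf₀⟩ : D i g ≠ 0 ∧ f ≠ 0 := by simpa [logDifferential, hDf] using hi
  obtain ⟨hgj, -⟩ : D j g ≠ 0 ∧ f ≠ 0 := by simpa [logDifferential, hDf] using hj
  have hg₀ : g ≠ 0 := by
    rintro rfl
    exact hgi (map_zero (D i))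
  rw [derivation_logDifferential, sub_eq_zero] at hfij hgij
  simp only [logDifferential, differential, hDf, map_neg] at hfij hgij
  have hf' : D i (D j g) * f = -(D i g * D j g) := by
    field_simp at hfij
    linear_combination -hfij
  have hg' : D i (D j g) * g = D i g * D j g := by
    field_simp at hgij
    linear_combination hgij
  have hne : D i (D j g) ≠ 0 := left_ne_zero_of_mul (hg' ▸ mul_ne_zero hgi hgj)
  exact mul_left_cancel₀ hne (by rw [hf', mul_neg, hg'])

end Differentials

section RationalFunctions

instance : Algebra.FormallyEtale P K := .of_isLocalization (nonZeroDivisors P)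

/-- The partial derivative `∂/∂xᵢ` of rational functions. -/
def partialDeriv (i : ℕ) : Derivation ℝ K K :=
  etaleExtension ((Algebra.linearMap P K).compDer (pderiv i))

lemma partialDeriv_toK (i : ℕ) (p : P) : partialDeriv i (toK p) = toK (pderiv i p) :=
  etaleExtension_algebraMap _ p

lemma commutator_partialDeriv (i j : ℕ) : ⁅partialDeriv i, partialDeriv j⁆ = 0 := by
  refine derivation_ext_of_isFractionRing (A := P) fun p => ?_
  change ⁅partialDeriv i, partialDeriv j⁆ (toK p) = 0
  rw [Derivation.commutator_apply, partialDeriv_toK, partialDeriv_toK, partialDeriv_toK,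
    partialDeriv_toK, pderiv_pderiv_comm, sub_self]

lemma toK_injective : Function.Injective toK := IsFractionRing.injective P K

lemma exists_isRelPrime_eq_div (f : K) :
    ∃ p q : P, q ≠ 0 ∧ IsRelPrime p q ∧ f = toK p / toK q :=
  ⟨IsFractionRing.num P f, IsFractionRing.den P f,
    nonZeroDivisors.ne_zero (IsFractionRing.den P f).2, IsFractionRing.num_den_reduced P f,
    (IsFractionRing.mk'_num_den' P f).symm⟩

lemma support_differential_div {p q : P} (hq : q ≠ 0) (hpq : IsRelPrime p q) :
    Function.support (differential partialDeriv (toK p / toK q)) = ↑p.vars ∪ ↑q.vars := by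
  ext i
  have hq' : toK q ≠ 0 := (map_ne_zero_iff toK toK_injective).2 hq
  have hzero : partialDeriv i (toK p / toK q) = 0 ↔ pderiv i p * q = p * pderiv i q := by
    rw [Derivation.leibniz_div, ← toK_injective.eq_iff, map_mul, map_mul,
      ← sub_eq_zero (b := _ * _)]
    simp only [partialDeriv_toK, smul_eq_mul]
    simp [hq', mul_comm]
  simp only [Function.mem_support, differential, Set.mem_union, Finset.mem_coe, ne_eq, hzero]
  refine ⟨fun h => ?_, fun h h' => ?_⟩
  · contrapose! h
    rw [pderiv_eq_zero_of_notMem_vars h.1, pderiv_eq_zero_of_notMem_vars h.2, zero_mul, mul_zero]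
  · have := notMem_vars_of_pderiv_mul_eq hq hpq h'
    tauto

lemma support_differential (f : K) :
    Function.support (differential partialDeriv f) = Vars f := by
  ext i
  constructor
  · intro hi
    obtain ⟨p, q, hq, hpq, rfl⟩ := exists_isRelPrime_eq_div f
    rw [support_differential_div hq hpq] at hi
    exact ⟨p, q, hq, hpq, rfl, hi⟩
  · rintro ⟨p, q, hq, hpq, rfl, hi⟩
    rw [support_differential_div hq hpq]
    exact hi

lemma finite_Vars (f : K) : (Vars f).Finite := by
  obtain ⟨p, q, hq, hpq, rfl⟩ := exists_isRelPrime_eq_div f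
  rw [← support_differential, support_differential_div hq hpq]
  exact p.vars.finite_toSet.union q.vars.finite_toSet

lemma support_logDifferential_partialDeriv (f : K) :
    Function.support (logDifferential partialDeriv f) = Vars f := by
  rw [support_logDifferential, support_differential]

lemma Vars_Xv (i : ℕ) : Vars (Xv i) = {i} := by
  have h := support_differential_div (p := X i) one_ne_zero isRelPrime_one_right
  rw [support_differential, map_one, div_one] at h
  simpa [vars_X, Xv] using h

variable {f g h : K}

lemma Vars_zero : Vars 0 = ∅ := by
  rw [← support_differential, differential_zero, Function.support_zero]

lemma Vars_one : Vars 1 = ∅ := by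
  rw [← support_differential]
  exact Function.support_eq_empty_iff.2 (funext fun i => (partialDeriv i).map_one_eq_zero)

lemma Vars_neg : Vars (-f) = Vars f := by
  rw [← support_differential, differential_neg, Function.support_neg, support_differential]

lemma ne_zero_of_nonempty_Vars (hf : (Vars f).Nonempty) : f ≠ 0 := by
  rintro rfl
  simp [Vars_zero] at hf

lemma Vars_add (hd : Disjoint (Vars g) (Vars h)) : Vars (g + h) = Vars g ∪ Vars h := by
  simp only [← support_differential] at hd ⊢
  rw [differential_add, support_add_of_disjoint hd]

lemma Vars_sub (hd : Disjoint (Vars g) (Vars h)) : Vars (g - h) = Vars g ∪ Vars h := by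
  rw [sub_eq_add_neg, Vars_add (by rwa [Vars_neg]), Vars_neg]

lemma Vars_mul (hg : g ≠ 0) (hh : h ≠ 0) (hd : Disjoint (Vars g) (Vars h)) :
    Vars (g * h) = Vars g ∪ Vars h := by
  simp only [← support_logDifferential_partialDeriv] at hd ⊢
  rw [logDifferential_mul _ hg hh, support_add_of_disjoint hd]

lemma Vars_div (hg : g ≠ 0) (hh : h ≠ 0) (hd : Disjoint (Vars g) (Vars h)) :
    Vars (g / h) = Vars g ∪ Vars h := by
  simp only [← support_logDifferential_partialDeriv] at hd ⊢
  rw [logDifferential_div _ hg hh, support_add_of_disjoint (by rwa [Function.support_neg]),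
    Function.support_neg]

lemma Vars_applyOp_of_ne_zero (o : Op) (hg : g ≠ 0) (hh : h ≠ 0) (hd : Disjoint (Vars g) (Vars h)) :
    Vars (applyOp o g h) = Vars g ∪ Vars h := by
  cases o
  exacts [Vars_add hd, Vars_sub hd, Vars_mul hg hh hd, Vars_div hg hh hd]

end RationalFunctions

section ArithmeticExpressions

variable {f g h : K}

lemma isAE_applyOp (hg : IsAE g) (hh : IsAE h) (hd : Disjoint (Vars g) (Vars h)) (o : Op) :
    IsAE (applyOp o g h) := by
  cases o
  exacts [hg.add hh hd, hg.sub hh hd, hg.mul hh hd, hg.div hh hd]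

lemma IsAE.induction_applyOp {motive : ∀ f, IsAE f → Prop} (var : ∀ i, motive (Xv i) (.var i))
    (op : ∀ g h o (hg : IsAE g) (hh : IsAE h) (hd : Disjoint (Vars g) (Vars h)),
      motive g hg → motive h hh → motive (applyOp o g h) (isAE_applyOp hg hh hd o))
    (hf : IsAE f) : motive f hf := by
  induction hf with
  | var i => exact var i
  | add hg hh hd ihg ihh => exact op _ _ .add hg hh hd ihg ihh
  | sub hg hh hd ihg ihh => exact op _ _ .sub hg hh hd ihg ihh
  | mul hg hh hd ihg ihh => exact op _ _ .mul hg hh hd ihg ihh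
  | div hg hh hd ihg ihh => exact op _ _ .div hg hh hd ihg ihh

lemma IsAE.nonempty_Vars (hf : IsAE f) : (Vars f).Nonempty := by
  induction hf using IsAE.induction_applyOp with
  | var i => simp [Vars_Xv]
  | op g h o _ _ hd hg hh =>
    rw [Vars_applyOp_of_ne_zero o (ne_zero_of_nonempty_Vars hg) (ne_zero_of_nonempty_Vars hh) hd]
    exact hg.inl

lemma IsAE.ne_zero (hf : IsAE f) : f ≠ 0 := ne_zero_of_nonempty_Vars hf.nonempty_Vars

lemma IsAE.Vars_applyOp (hg : IsAE g) (hh : IsAE h) (hd : Disjoint (Vars g) (Vars h)) (o : Op) :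
    Vars (applyOp o g h) = Vars g ∪ Vars h :=
  Vars_applyOp_of_ne_zero o hg.ne_zero hh.ne_zero hd

lemma IsAE.exists_eq_Xv (hf : IsAE f) (h₁ : (Vars f).Subsingleton) : ∃ i, f = Xv i := by
  induction hf using IsAE.induction_applyOp with
  | var i => exact ⟨i, rfl⟩
  | op g h o hg hh hd =>
    rw [hg.Vars_applyOp hh hd] at h₁
    obtain ⟨i, hi⟩ := hg.nonempty_Vars
    obtain ⟨j, hj⟩ := hh.nonempty_Vars
    exact (hd.ne_of_mem hi hj (h₁ (.inl hi) (.inr hj))).elim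

lemma IsAE.eq_Xv_or_three_le_ncard (hg : IsAE g) (hh : IsAE h)
    (hd : Disjoint (Vars g) (Vars h)) :
    (∃ i j, i ≠ j ∧ g = Xv i ∧ h = Xv j) ∨ 3 ≤ (Vars g ∪ Vars h).ncard := by
  have hpos {k : K} (hk : IsAE k) : 1 ≤ (Vars k).ncard :=
    (Set.ncard_pos (finite_Vars k)).2 hk.nonempty_Vars
  have htwo {k : K} (hk : (Vars k).Nontrivial) : 2 ≤ (Vars k).ncard :=
    (Set.one_lt_ncard_iff_nontrivial_and_finite).2 ⟨hk, finite_Vars k⟩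
  rw [Set.ncard_union_eq hd (finite_Vars g) (finite_Vars h)]
  rcases (Vars g).subsingleton_or_nontrivial with hg₁ | hg₂
  · rcases (Vars h).subsingleton_or_nontrivial with hh₁ | hh₂
    · obtain ⟨i, rfl⟩ := hg.exists_eq_Xv hg₁
      obtain ⟨j, rfl⟩ := hh.exists_eq_Xv hh₁
      exact .inl ⟨i, j, by simpa [Vars_Xv] using hd, rfl, rfl⟩
    · exact .inr (add_le_add (hpos hg) (htwo hh₂))
  · exact .inr (add_le_add (htwo hg₂) (hpos hh))

lemma firstType_Xv (i : ℕ) : FirstType (Xv i) := by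
  refine ⟨.var i, fun hneg => ?_⟩
  obtain ⟨j, hj⟩ := hneg.exists_eq_Xv (by simp [Vars_neg, Vars_Xv])
  obtain rfl : j = i := by simpa [Vars_neg, Vars_Xv] using congrArg Vars hj.symm
  exact (IsAE.var j).ne_zero (neg_eq_self.1 hj)

end ArithmeticExpressions

section EndingOperators

variable {f g h : K} {o : Op}

lemma EndsWith.eq_Xv_or_eq_applyOp (hf : EndsWith f o) :
    (o = .mul ∧ ∃ i, f = Xv i) ∨
      ∃ g h, IsAE g ∧ IsAE h ∧ Disjoint (Vars g) (Vars h) ∧ f = applyOp o g h := by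
  have hbase {i j : ℕ} (hij : i ≠ j) (o : Op) : ∃ g h, IsAE g ∧ IsAE h ∧
      Disjoint (Vars g) (Vars h) ∧ applyOp o (Xv i) (Xv j) = applyOp o g h :=
    ⟨Xv i, Xv j, .var i, .var j, by simpa [Vars_Xv] using hij, rfl⟩
  cases hf with
  | var i => exact .inl ⟨rfl, i, rfl⟩
  | add_base hij => exact .inr (hbase hij .add)
  | sub_base hij => exact .inr (hbase hij .sub)
  | mul_base hij => exact .inr (hbase hij .mul)
  | div_base hij => exact .inr (hbase hij .div)
  | add_rec hg hh hd | sub_rec hg hh hd | mul_rec hg hh hd | div_rec hg hh hd =>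
    exact .inr ⟨_, _, hg, hh, hd, rfl⟩

lemma EndsWith.isAE (hf : EndsWith f o) : IsAE f := by
  obtain ⟨-, i, rfl⟩ | ⟨g, h, hg, hh, hd, rfl⟩ := hf.eq_Xv_or_eq_applyOp
  · exact .var i
  · exact isAE_applyOp hg hh hd o

lemma EndsIn.isAE {s : Set Op} (hf : EndsIn f s) : IsAE f := by
  obtain ⟨o, -, ho⟩ := hf
  exact ho.isAE

lemma endsIn_Xv {s : Set Op} (hs : .mul ∈ s) (i : ℕ) : EndsIn (Xv i) s := ⟨.mul, hs, .var i⟩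

lemma EndsIn.endsWith_add (hg : EndsIn g {.sub}ᶜ) (hh : EndsIn h {.sub}ᶜ)
    (hd : Disjoint (Vars g) (Vars h)) : EndsWith (g + h) .add := by
  obtain ⟨i, j, hij, rfl, rfl⟩ | h₃ := hg.isAE.eq_Xv_or_three_le_ncard hh.isAE hd
  · exact .add_base hij
  · obtain ⟨⟨o₁, ho₁, hg⟩, o₂, ho₂, hh⟩ := And.intro hg hh
    exact .add_rec hg.isAE hh.isAE hd (by rwa [Vars_add hd]) ho₁ ho₂ hg hh

lemma EndsIn.endsWith_sub (hg : EndsIn g {.sub}ᶜ) (hh : EndsIn h {.sub}ᶜ) (hh₁ : FirstType h)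
    (hd : Disjoint (Vars g) (Vars h)) : EndsWith (g - h) .sub := by
  obtain ⟨i, j, hij, rfl, rfl⟩ | h₃ := hg.isAE.eq_Xv_or_three_le_ncard hh.isAE hd
  · exact .sub_base hij
  · obtain ⟨⟨o₁, ho₁, hg⟩, o₂, ho₂, hh⟩ := And.intro hg hh
    exact .sub_rec hg.isAE hh.isAE hd (by rwa [Vars_sub hd]) ho₁ ho₂ hh₁ hg hh

lemma EndsIn.endsWith_mul (hg : EndsIn g {.div}ᶜ) (hh : EndsIn h {.div}ᶜ)
    (hd : Disjoint (Vars g) (Vars h)) : EndsWith (g * h) .mul := by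
  obtain ⟨i, j, hij, rfl, rfl⟩ | h₃ := hg.isAE.eq_Xv_or_three_le_ncard hh.isAE hd
  · exact .mul_base hij
  · rw [← Vars_mul hg.isAE.ne_zero hh.isAE.ne_zero hd] at h₃
    obtain ⟨⟨o₁, ho₁, hg⟩, o₂, ho₂, hh⟩ := And.intro hg hh
    exact .mul_rec hg.isAE hh.isAE hd h₃ ho₁ ho₂ hg hh

lemma EndsIn.endsWith_div (hg : EndsIn g {.div}ᶜ) (hh : EndsIn h {.div}ᶜ)
    (hd : Disjoint (Vars g) (Vars h)) : EndsWith (g / h) .div := by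
  obtain ⟨i, j, hij, rfl, rfl⟩ | h₃ := hg.isAE.eq_Xv_or_three_le_ncard hh.isAE hd
  · exact .div_base hij
  · rw [← Vars_div hg.isAE.ne_zero hh.isAE.ne_zero hd] at h₃
    obtain ⟨⟨o₁, ho₁, hg⟩, o₂, ho₂, hh⟩ := And.intro hg hh
    exact .div_rec hg.isAE hh.isAE hd h₃ ho₁ ho₂ hg hh

lemma EndsWith.exists_eq_sub (hf : EndsWith f .sub) :
    ∃ g h, EndsIn g {.sub}ᶜ ∧ EndsIn h {.sub}ᶜ ∧ FirstType h ∧ Disjoint (Vars g) (Vars h) ∧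
      f = g - h := by
  cases hf with
  | @sub_base i j hij =>
    exact ⟨Xv i, Xv j, endsIn_Xv (by simp) i, endsIn_Xv (by simp) j, firstType_Xv j,
      by simpa [Vars_Xv] using hij, rfl⟩
  | sub_rec _ _ hd _ ho₁ ho₂ hh₁ hg hh => exact ⟨_, _, ⟨_, ho₁, hg⟩, ⟨_, ho₂, hh⟩, hh₁, hd, rfl⟩

lemma EndsWith.exists_eq_div (hf : EndsWith f .div) :
    ∃ g h, EndsIn g {.div}ᶜ ∧ EndsIn h {.div}ᶜ ∧ Disjoint (Vars g) (Vars h) ∧ f = g / h := by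
  cases hf with
  | @div_base i j hij =>
    exact ⟨Xv i, Xv j, endsIn_Xv (by simp) i, endsIn_Xv (by simp) j,
      by simpa [Vars_Xv] using hij, rfl⟩
  | div_rec _ _ hd _ ho₁ ho₂ hg hh => exact ⟨_, _, ⟨_, ho₁, hg⟩, ⟨_, ho₂, hh⟩, hd, rfl⟩

end EndingOperators

section Existence

variable {f g h p q : K}

/-- A possibly empty sum of expressions that do not end with `-`. -/
def IsSumOrZero (q : K) : Prop := q = 0 ∨ EndsIn q {.sub}ᶜ

/-- A possibly empty product of expressions that do not end with `÷`. -/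
def IsProductOrOne (q : K) : Prop := q = 1 ∨ EndsIn q {.div}ᶜ

lemma EndsIn.add (hp : EndsIn p {.sub}ᶜ) (hq : IsSumOrZero q)
    (hd : Disjoint (Vars p) (Vars q)) : EndsIn (p + q) {.sub}ᶜ := by
  obtain rfl | hq := hq
  · rwa [add_zero]
  · exact ⟨.add, by simp, hp.endsWith_add hq hd⟩

lemma IsSumOrZero.add (hp : IsSumOrZero p) (hq : IsSumOrZero q)
    (hd : Disjoint (Vars p) (Vars q)) : IsSumOrZero (p + q) := by
  obtain rfl | hp := hp
  · rwa [zero_add]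
  · exact .inr (hp.add hq hd)

lemma EndsIn.mul (hp : EndsIn p {.div}ᶜ) (hq : IsProductOrOne q)
    (hd : Disjoint (Vars p) (Vars q)) : EndsIn (p * q) {.div}ᶜ := by
  obtain rfl | hq := hq
  · rwa [mul_one]
  · exact ⟨.mul, by simp, hp.endsWith_mul hq hd⟩

lemma IsProductOrOne.mul (hp : IsProductOrOne p) (hq : IsProductOrOne q)
    (hd : Disjoint (Vars p) (Vars q)) : IsProductOrOne (p * q) := by
  obtain rfl | hp := hp
  · rwa [one_mul]
  · exact .inr (hp.mul hq hd)

lemma IsProductOrOne.ne_zero (hq : IsProductOrOne q) : q ≠ 0 := by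
  obtain rfl | hq := hq
  exacts [one_ne_zero, hq.isAE.ne_zero]

lemma EndsIn.exists_endsWith_sub (hp : EndsIn p {.sub}ᶜ) (hq : IsSumOrZero q)
    (hd : Disjoint (Vars p) (Vars q))
    (ih : ∀ k, IsAE k → Vars k ⊂ Vars (p - q) → ∃ o, EndsWith k o) :
    ∃ o, EndsWith (p - q) o := by
  obtain rfl | hq := hq
  · obtain ⟨o, -, ho⟩ := hp
    exact ⟨o, by rwa [sub_zero]⟩
  -- If `-q` is itself a difference `r - s`, then `p - q = (p + r) - s` with `s` of the first type.
  by_cases hq' : IsAE (-q)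
  · obtain ⟨o, ho⟩ := ih (-q) hq' (by
      rw [Vars_neg, Vars_sub hd]
      exact ssubset_union_right_of_disjoint hd hp.isAE.nonempty_Vars)
    rw [← Vars_neg (f := q)] at hd
    rw [sub_eq_add_neg]
    by_cases ho_sub : o = .sub
    · subst ho_sub
      obtain ⟨r, s, hr, hs, hs₁, hrs, hq_eq⟩ := ho.exists_eq_sub
      rw [hq_eq, Vars_sub hrs, Set.disjoint_union_right] at hd
      refine ⟨.sub, ?_⟩
      rw [hq_eq, ← add_sub_assoc]
      refine (hp.add (.inr hr) hd.1).endsWith_sub hs hs₁ ?_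
      rw [Vars_add hd.1]
      exact hd.2.union_left hrs
    · exact ⟨.add, hp.endsWith_add ⟨o, ho_sub, ho⟩ hd⟩
  · exact ⟨.sub, hp.endsWith_sub hq ⟨hq.isAE, hq'⟩ hd⟩

lemma EndsIn.exists_endsWith_div (hp : EndsIn p {.div}ᶜ) (hq : IsProductOrOne q)
    (hd : Disjoint (Vars p) (Vars q)) : ∃ o, EndsWith (p / q) o := by
  obtain rfl | hq := hq
  · obtain ⟨o, -, ho⟩ := hp
    exact ⟨o, by rwa [div_one]⟩
  · exact ⟨.div, hp.endsWith_div hq hd⟩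

lemma EndsWith.eq_sub {o : Op} (hf : EndsWith f o) :
    ∃ p q, EndsIn p {.sub}ᶜ ∧ IsSumOrZero q ∧ Disjoint (Vars p) (Vars q) ∧ f = p - q := by
  by_cases ho : o = .sub
  · subst ho
    obtain ⟨g, h, hg, hh, -, hd, rfl⟩ := hf.exists_eq_sub
    exact ⟨g, h, hg, .inr hh, hd, rfl⟩
  · exact ⟨f, 0, ⟨o, ho, hf⟩, .inl rfl, by simp [Vars_zero], (sub_zero f).symm⟩

lemma EndsWith.eq_div {o : Op} (hf : EndsWith f o) :
    ∃ p q, EndsIn p {.div}ᶜ ∧ IsProductOrOne q ∧ Disjoint (Vars p) (Vars q) ∧ f = p / q := by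
  by_cases ho : o = .div
  · subst ho
    obtain ⟨g, h, hg, hh, hd, rfl⟩ := hf.exists_eq_div
    exact ⟨g, h, hg, .inr hh, hd, rfl⟩
  · exact ⟨f, 1, ⟨o, ho, hf⟩, .inl rfl, by simp [Vars_one], (div_one f).symm⟩

lemma EndsWith.exists_endsWith_add {o₁ o₂ : Op} (hg : EndsWith g o₁) (hh : EndsWith h o₂)
    (hd : Disjoint (Vars g) (Vars h))
    (ih : ∀ k, IsAE k → Vars k ⊂ Vars (g + h) → ∃ o, EndsWith k o) :
    ∃ o, EndsWith (g + h) o := by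
  obtain ⟨p, q, hp, hq, hpq, rfl⟩ := hg.eq_sub
  obtain ⟨r, s, hr, hs, hrs, rfl⟩ := hh.eq_sub
  simp only [Vars_sub hpq, Vars_sub hrs, Set.disjoint_union_left, Set.disjoint_union_right] at hd
  obtain ⟨⟨hpr, hqr⟩, hps, hqs⟩ := hd
  rw [sub_add_sub_comm] at ih ⊢
  refine (hp.add (.inr hr) hpr).exists_endsWith_sub (hq.add hs hqs) ?_ ih
  rw [Vars_add hpr, Vars_add hqs]
  exact (hpq.union_right hps).union_left (hqr.symm.union_right hrs)

lemma EndsWith.exists_endsWith_sub {o₁ o₂ : Op} (hg : EndsWith g o₁) (hh : EndsWith h o₂)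
    (hd : Disjoint (Vars g) (Vars h))
    (ih : ∀ k, IsAE k → Vars k ⊂ Vars (g - h) → ∃ o, EndsWith k o) :
    ∃ o, EndsWith (g - h) o := by
  obtain ⟨p, q, hp, hq, hpq, rfl⟩ := hg.eq_sub
  obtain ⟨r, s, hr, hs, hrs, rfl⟩ := hh.eq_sub
  simp only [Vars_sub hpq, Vars_sub hrs, Set.disjoint_union_left, Set.disjoint_union_right] at hd
  obtain ⟨⟨hpr, hqr⟩, hps, hqs⟩ := hd
  have heq : p - q - (r - s) = p + s - (q + r) := by ring
  rw [heq] at ih ⊢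
  refine (hp.add hs hps).exists_endsWith_sub (hq.add (.inr hr) hqr) ?_ ih
  rw [Vars_add hps, Vars_add hqr]
  exact (hpq.union_right hpr).union_left (hqs.symm.union_right hrs.symm)

lemma EndsWith.exists_endsWith_mul {o₁ o₂ : Op} (hg : EndsWith g o₁) (hh : EndsWith h o₂)
    (hd : Disjoint (Vars g) (Vars h)) : ∃ o, EndsWith (g * h) o := by
  obtain ⟨p, q, hp, hq, hpq, rfl⟩ := hg.eq_div
  obtain ⟨r, s, hr, hs, hrs, rfl⟩ := hh.eq_div
  simp only [Vars_div hp.isAE.ne_zero hq.ne_zero hpq, Vars_div hr.isAE.ne_zero hs.ne_zero hrs,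
    Set.disjoint_union_left, Set.disjoint_union_right] at hd
  obtain ⟨⟨hpr, hqr⟩, hps, hqs⟩ := hd
  rw [div_mul_div_comm]
  refine (hp.mul (.inr hr) hpr).exists_endsWith_div (hq.mul hs hqs) ?_
  rw [Vars_mul hp.isAE.ne_zero hr.isAE.ne_zero hpr, Vars_mul hq.ne_zero hs.ne_zero hqs]
  exact (hpq.union_right hps).union_left (hqr.symm.union_right hrs)

lemma EndsWith.exists_endsWith_div {o₁ o₂ : Op} (hg : EndsWith g o₁) (hh : EndsWith h o₂)
    (hd : Disjoint (Vars g) (Vars h)) : ∃ o, EndsWith (g / h) o := by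
  obtain ⟨p, q, hp, hq, hpq, rfl⟩ := hg.eq_div
  obtain ⟨r, s, hr, hs, hrs, rfl⟩ := hh.eq_div
  simp only [Vars_div hp.isAE.ne_zero hq.ne_zero hpq, Vars_div hr.isAE.ne_zero hs.ne_zero hrs,
    Set.disjoint_union_left, Set.disjoint_union_right] at hd
  obtain ⟨⟨hpr, hqr⟩, hps, hqs⟩ := hd
  rw [div_div_div_eq]
  refine (hp.mul hs hps).exists_endsWith_div (hq.mul (.inr hr) hqr) ?_
  rw [Vars_mul hp.isAE.ne_zero hs.ne_zero hps, Vars_mul hq.ne_zero hr.isAE.ne_zero hqr]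
  exact (hpq.union_right hpr).union_left (hqs.symm.union_right hrs.symm)

lemma IsAE.exists_endsWith (hf : IsAE f) : ∃ o, EndsWith f o := by
  induction hn : (Vars f).ncard using Nat.strong_induction_on generalizing f with
  | _ n ih =>
    have ih' (k : K) (hk : IsAE k) (hkf : Vars k ⊂ Vars f) : ∃ o, EndsWith k o :=
      ih _ (hn ▸ Set.ncard_lt_ncard hkf (finite_Vars f)) hk rfl
    induction hf using IsAE.induction_applyOp with
    | var i => exact ⟨.mul, .var i⟩
    | op g h o hg hh hd =>
      have hvars := hg.Vars_applyOp hh hd o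
      obtain ⟨_, hg'⟩ := ih' g hg (by
        rw [hvars, Set.union_comm]
        exact ssubset_union_right_of_disjoint hd.symm hh.nonempty_Vars)
      obtain ⟨_, hh'⟩ := ih' h hh (by
        rw [hvars]
        exact ssubset_union_right_of_disjoint hd hg.nonempty_Vars)
      cases o
      exacts [hg'.exists_endsWith_add hh' hd ih', hg'.exists_endsWith_sub hh' hd ih',
        hg'.exists_endsWith_mul hh' hd, hg'.exists_endsWith_div hh' hd]

end Existence

section Uniqueness

variable {f g h t u : K} {o : Op} {i : ℕ} {ω α β : ℕ → K}

lemma not_isSplitForm_of_support_eq_Vars_Xv (hω : Function.support ω = Vars (Xv i)) :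
    ¬IsSplitForm partialDeriv ω := fun h => by
  simpa [hω, Vars_Xv] using h.nontrivial_support

lemma ne_neg_of_support_eq_Vars_Xv (hω : Function.support ω = Vars (Xv i)) : ω ≠ -ω := by
  rw [ne_eq, self_eq_neg]
  rintro rfl
  simp [Vars_Xv] at hω

/-- A piece of a sum of expressions ending with `×` or `÷`: a variable, or a rational function
with a splitting logarithmic differential. -/
def IsTerm (u : K) : Prop :=
  (∃ i, u = Xv i) ∨ IsSplitForm partialDeriv (logDifferential partialDeriv u)

/-- A piece of a product of expressions ending with `+` or `-`: a variable, or a rational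
function with a splitting differential. -/
def IsFactor (u : K) : Prop :=
  (∃ i, u = Xv i) ∨ IsSplitForm partialDeriv (differential partialDeriv u)

lemma eq_Xv_or_isSplitForm_of_Vars_eq (h : Vars u = Vars t)
    (hα : Function.support α = Vars u) (hβ : Function.support β = Vars t)
    (hu : (∃ i, u = Xv i) ∨ IsSplitForm partialDeriv α)
    (ht : (∃ i, t = Xv i) ∨ IsSplitForm partialDeriv β) :
    (∃ i, u = Xv i ∧ t = Xv i) ∨ IsSplitForm partialDeriv α ∧ IsSplitForm partialDeriv β := by
  obtain ⟨i, rfl⟩ | hu := hu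
  · obtain ⟨j, rfl⟩ | ht := ht
    · obtain rfl : i = j := by simpa [Vars_Xv] using h
      exact .inl ⟨i, rfl, rfl⟩
    · exact (not_isSplitForm_of_support_eq_Vars_Xv (hβ.trans h.symm) ht).elim
  · obtain ⟨j, rfl⟩ | ht := ht
    · exact (not_isSplitForm_of_support_eq_Vars_Xv (hα.trans h) hu).elim
    · exact .inr ⟨hu, ht⟩

lemma IsTerm.not_isSplitForm_differential (hu : IsTerm u) :
    ¬IsSplitForm partialDeriv (differential partialDeriv u) := by
  obtain ⟨i, rfl⟩ | hu := hu
  · exact not_isSplitForm_of_support_eq_Vars_Xv (support_differential _)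
  · exact fun h => h.not_isSplitForm_logDifferential commutator_partialDeriv hu

lemma IsFactor.not_isSplitForm_logDifferential (hu : IsFactor u) :
    ¬IsSplitForm partialDeriv (logDifferential partialDeriv u) := by
  obtain ⟨i, rfl⟩ | hu := hu
  · exact not_isSplitForm_of_support_eq_Vars_Xv (support_logDifferential_partialDeriv _)
  · exact hu.not_isSplitForm_logDifferential commutator_partialDeriv

lemma IsTerm.eq_neg_of_differential_eq_neg (hu : IsTerm u) (ht : IsTerm t)
    (h : differential partialDeriv u = -differential partialDeriv t) : u = -t := by
  have hvars : Vars u = Vars t := by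
    rw [← support_differential, h, Function.support_neg, support_differential]
  obtain ⟨i, rfl, rfl⟩ | ⟨hu, ht⟩ := eq_Xv_or_isSplitForm_of_Vars_eq hvars
    (support_logDifferential_partialDeriv u) (support_logDifferential_partialDeriv t) hu ht
  · exact (ne_neg_of_support_eq_Vars_Xv (support_differential _) h).elim
  · exact hu.eq_neg_of_differential_eq_neg commutator_partialDeriv ht h

lemma IsFactor.logDifferential_ne_neg (hu : IsFactor u) (ht : IsFactor t) :
    logDifferential partialDeriv u ≠ -logDifferential partialDeriv t := by
  intro h
  have hvars : Vars u = Vars t := by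
    rw [← support_logDifferential_partialDeriv, h, Function.support_neg,
      support_logDifferential_partialDeriv]
  obtain ⟨i, rfl, rfl⟩ | ⟨hu, ht⟩ := eq_Xv_or_isSplitForm_of_Vars_eq hvars
    (support_differential u) (support_differential t) hu ht
  · exact ne_neg_of_support_eq_Vars_Xv (support_logDifferential_partialDeriv _) h
  · exact hu.logDifferential_ne_neg commutator_partialDeriv ht h

lemma isClosedForm_differential_partialDeriv (f : K) :
    IsClosedForm partialDeriv (differential partialDeriv f) :=
  isClosedForm_differential commutator_partialDeriv

lemma isClosedForm_logDifferential_partialDeriv (f : K) :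
    IsClosedForm partialDeriv (logDifferential partialDeriv f) :=
  isClosedForm_logDifferential commutator_partialDeriv

lemma isSplitForm_add_of_disjoint_Vars (hg : IsAE g) (hh : IsAE h)
    (hd : Disjoint (Vars g) (Vars h)) (hα : Function.support α = Vars g)
    (hβ : Function.support β = Vars h) (hβc : IsClosedForm partialDeriv β) :
    IsSplitForm partialDeriv (α + β) := by
  rw [← hα, ← hβ] at hd
  exact hβc.isSplitForm_add hd (hα ▸ hg.nonempty_Vars) (hβ ▸ hh.nonempty_Vars)

lemma EndsWith.isSplitForm_differential (hf : EndsWith f o) (ho : o = .add ∨ o = .sub) :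
    IsSplitForm partialDeriv (differential partialDeriv f) := by
  obtain ⟨rfl, -⟩ | ⟨g, h, hg, hh, hd, rfl⟩ := hf.eq_Xv_or_eq_applyOp
  · simp at ho
  obtain rfl | rfl := ho
  · rw [applyOp, differential_add]
    exact isSplitForm_add_of_disjoint_Vars hg hh hd (support_differential g)
      (support_differential h) (isClosedForm_differential_partialDeriv h)
  · rw [applyOp, differential_sub]
    exact isSplitForm_add_of_disjoint_Vars hg hh hd (support_differential g)
      (by rw [Function.support_neg, support_differential])
      (isClosedForm_differential_partialDeriv h).neg

lemma EndsWith.isTerm (hf : EndsWith f o) (ho : o = .mul ∨ o = .div) : IsTerm f := by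
  obtain ⟨-, i, rfl⟩ | ⟨g, h, hg, hh, hd, rfl⟩ := hf.eq_Xv_or_eq_applyOp
  · exact .inl ⟨i, rfl⟩
  refine .inr ?_
  obtain rfl | rfl := ho
  · rw [applyOp, logDifferential_mul _ hg.ne_zero hh.ne_zero]
    exact isSplitForm_add_of_disjoint_Vars hg hh hd (support_logDifferential_partialDeriv g)
      (support_logDifferential_partialDeriv h) (isClosedForm_logDifferential_partialDeriv h)
  · rw [applyOp, logDifferential_div _ hg.ne_zero hh.ne_zero]
    exact isSplitForm_add_of_disjoint_Vars hg hh hd (support_logDifferential_partialDeriv g)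
      (by rw [Function.support_neg, support_logDifferential_partialDeriv])
      (isClosedForm_logDifferential_partialDeriv h).neg

@[elab_as_elim]
lemma EndsIn.induction_add {motive : K → Prop} (hf : EndsIn f {.sub}ᶜ)
    (term : ∀ u, IsAE u → IsTerm u → motive u)
    (add : ∀ g h, IsAE g → IsAE h → Disjoint (Vars g) (Vars h) → motive g → motive h →
      motive (g + h)) : motive f := by
  obtain ⟨o, ho, hf⟩ := hf
  have hXv (i : ℕ) : motive (Xv i) := term _ (.var i) (.inl ⟨i, rfl⟩)
  have hterm {f : K} {o : Op} (hf : EndsWith f o) (ho : o = .mul ∨ o = .div) : motive f :=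
    term f hf.isAE (hf.isTerm ho)
  induction hf with
  | sub_base | sub_rec => exact (ho rfl).elim
  | var i => exact hXv i
  | mul_base hij => exact hterm (.mul_base hij) (.inl rfl)
  | div_base hij => exact hterm (.div_base hij) (.inr rfl)
  | mul_rec hg hh hd h₃ ho₁ ho₂ hg' hh' =>
    exact hterm (.mul_rec hg hh hd h₃ ho₁ ho₂ hg' hh') (.inl rfl)
  | div_rec hg hh hd h₃ ho₁ ho₂ hg' hh' =>
    exact hterm (.div_rec hg hh hd h₃ ho₁ ho₂ hg' hh') (.inr rfl)
  | @add_base i j hij =>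
    exact add _ _ (.var i) (.var j) (by simpa [Vars_Xv] using hij) (hXv i) (hXv j)
  | add_rec hg hh hd _ ho₁ ho₂ _ _ ihg ihh => exact add _ _ hg hh hd (ihg ho₁) (ihh ho₂)

@[elab_as_elim]
lemma EndsIn.induction_mul {motive : K → Prop} (hf : EndsIn f {.div}ᶜ)
    (factor : ∀ u, IsFactor u → motive u)
    (mul : ∀ g h, IsAE g → IsAE h → Disjoint (Vars g) (Vars h) → motive g → motive h →
      motive (g * h)) : motive f := by
  obtain ⟨o, ho, hf⟩ := hf
  have hXv (i : ℕ) : motive (Xv i) := factor _ (.inl ⟨i, rfl⟩)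
  have hfactor {f : K} {o : Op} (hf : EndsWith f o) (ho : o = .add ∨ o = .sub) : motive f :=
    factor f (.inr (hf.isSplitForm_differential ho))
  induction hf with
  | div_base | div_rec => exact (ho rfl).elim
  | var i => exact hXv i
  | add_base hij => exact hfactor (.add_base hij) (.inl rfl)
  | sub_base hij => exact hfactor (.sub_base hij) (.inr rfl)
  | add_rec hg hh hd h₃ ho₁ ho₂ hg' hh' =>
    exact hfactor (.add_rec hg hh hd h₃ ho₁ ho₂ hg' hh') (.inl rfl)
  | sub_rec hg hh hd h₃ ho₁ ho₂ hh₁ hg' hh' =>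
    exact hfactor (.sub_rec hg hh hd h₃ ho₁ ho₂ hh₁ hg' hh') (.inr rfl)
  | @mul_base i j hij =>
    exact mul _ _ (.var i) (.var j) (by simpa [Vars_Xv] using hij) (hXv i) (hXv j)
  | mul_rec hg hh hd _ ho₁ ho₂ _ _ ihg ihh => exact mul _ _ hg hh hd (ihg ho₁) (ihh ho₂)

/-- `u` is one of the terms of the sum `f`: in the variables of `u`, the differentials of `f` and
`u` agree, and `-f` is an expression as soon as `-u` is. -/
structure IsTermOf (u f : K) : Prop where
  isTerm : IsTerm u
  isAE : IsAE u
  eqOn : Set.EqOn (differential partialDeriv f) (differential partialDeriv u)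
    (Function.support (differential partialDeriv u))
  isAE_neg : IsAE (-u) → IsAE (-f)

lemma IsTermOf.add_right (hu : IsTermOf u g) (hh : IsAE h) (hd : Disjoint (Vars g) (Vars h)) :
    IsTermOf u (g + h) where
  isTerm := hu.isTerm
  isAE := hu.isAE
  eqOn := by
    rw [differential_add]
    exact eqOn_add_left_of_disjoint hu.eqOn (by simpa only [support_differential] using hd)
  isAE_neg hneg := by
    rw [neg_add']
    exact (hu.isAE_neg hneg).sub hh (by rwa [Vars_neg])

lemma EndsIn.exists_isTermOf (hf : EndsIn f {.sub}ᶜ) :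
    ∀ i ∈ Vars f, ∃ u, IsTermOf u f ∧ i ∈ Vars u := by
  refine hf.induction_add (fun u hu hu' i hi => ⟨u, ⟨hu', hu, fun _ _ => rfl, id⟩, hi⟩) ?_
  intro g h hg hh hd ihg ihh i hi
  rw [Vars_add hd] at hi
  obtain hi | hi := hi
  · obtain ⟨u, hu, hiu⟩ := ihg i hi
    exact ⟨u, hu.add_right hh hd, hiu⟩
  · obtain ⟨u, hu, hiu⟩ := ihh i hi
    exact ⟨u, add_comm h g ▸ hu.add_right hg hd.symm, hiu⟩

/-- `u` is one of the factors of the product `f`: in the variables of `u`, the logarithmic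
differentials of `f` and `u` agree. -/
structure IsFactorOf (u f : K) : Prop where
  isFactor : IsFactor u
  eqOn : Set.EqOn (logDifferential partialDeriv f) (logDifferential partialDeriv u)
    (Function.support (logDifferential partialDeriv u))

lemma IsFactorOf.mul_right (hu : IsFactorOf u g) (hg : IsAE g) (hh : IsAE h)
    (hd : Disjoint (Vars g) (Vars h)) : IsFactorOf u (g * h) where
  isFactor := hu.isFactor
  eqOn := by
    rw [logDifferential_mul _ hg.ne_zero hh.ne_zero]
    exact eqOn_add_left_of_disjoint hu.eqOn
      (by simpa only [support_logDifferential_partialDeriv] using hd)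

lemma EndsIn.exists_isFactorOf (hf : EndsIn f {.div}ᶜ) :
    ∀ i ∈ Vars f, ∃ u, IsFactorOf u f ∧ i ∈ Vars u := by
  refine hf.induction_mul (fun u hu i hi => ⟨u, ⟨hu, fun _ _ => rfl⟩, hi⟩) ?_
  intro g h hg hh hd ihg ihh i hi
  rw [Vars_mul hg.ne_zero hh.ne_zero hd] at hi
  obtain hi | hi := hi
  · obtain ⟨u, hu, hiu⟩ := ihg i hi
    exact ⟨u, hu.mul_right hg hh hd, hiu⟩
  · obtain ⟨u, hu, hiu⟩ := ihh i hi
    exact ⟨u, mul_comm h g ▸ hu.mul_right hh hg hd.symm, hiu⟩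

lemma EndsIn.not_endsWith_sub (hf : EndsIn f {.sub}ᶜ) : ¬EndsWith f .sub := by
  intro hf'
  obtain ⟨g, h, -, hh, hh₁, hd, rfl⟩ := hf'.exists_eq_sub
  obtain ⟨i, hi⟩ := hh.isAE.nonempty_Vars
  obtain ⟨t, ht, hit⟩ := hh.exists_isTermOf i hi
  obtain ⟨u, hu, hiu⟩ := hf.exists_isTermOf i (Vars_sub hd ▸ .inr hi)
  have hclosed := isClosedForm_differential_partialDeriv (g - h)
  have hu_eqOn := hu.eqOn
  simp only [← support_differential] at hd hit hiu
  rw [differential_sub] at hclosed hu_eqOn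
  have hdut : differential partialDeriv u = -differential partialDeriv t :=
    hclosed.eq_neg_of_eqOn_support (isClosedForm_differential_partialDeriv u)
      (isClosedForm_differential_partialDeriv t) hu.isTerm.not_isSplitForm_differential
      ht.isTerm.not_isSplitForm_differential hu_eqOn ht.eqOn hd ⟨i, hiu, hit⟩
  have hut : u = -t := hu.isTerm.eq_neg_of_differential_eq_neg ht.isTerm hdut
  exact hh₁.2 (ht.isAE_neg (hut ▸ hu.isAE))

lemma EndsIn.not_endsWith_div (hf : EndsIn f {.div}ᶜ) : ¬EndsWith f .div := by
  intro hf'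
  obtain ⟨g, h, hg, hh, hd, rfl⟩ := hf'.exists_eq_div
  have hg₀ := hg.isAE.ne_zero
  have hh₀ := hh.isAE.ne_zero
  obtain ⟨i, hi⟩ := hh.isAE.nonempty_Vars
  obtain ⟨t, ht, hit⟩ := hh.exists_isFactorOf i hi
  obtain ⟨u, hu, hiu⟩ := hf.exists_isFactorOf i (Vars_div hg₀ hh₀ hd ▸ .inr hi)
  have hclosed := isClosedForm_logDifferential_partialDeriv (g / h)
  have hu_eqOn := hu.eqOn
  simp only [← support_logDifferential_partialDeriv] at hd hit hiu
  rw [logDifferential_div _ hg₀ hh₀] at hclosed hu_eqOn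
  exact hu.isFactor.logDifferential_ne_neg ht.isFactor <|
    hclosed.eq_neg_of_eqOn_support (isClosedForm_logDifferential_partialDeriv u)
      (isClosedForm_logDifferential_partialDeriv t) hu.isFactor.not_isSplitForm_logDifferential
      ht.isFactor.not_isSplitForm_logDifferential hu_eqOn ht.eqOn hd ⟨i, hiu, hit⟩

lemma EndsWith.unique {o₁ o₂ : Op} (hf₁ : EndsWith f o₁) (hf₂ : EndsWith f o₂) : o₁ = o₂ := by
  by_contra hne
  have hsub₁ (h : o₂ = .sub) : False := EndsIn.not_endsWith_sub ⟨o₁, h ▸ hne, hf₁⟩ (h ▸ hf₂)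
  have hsub₂ (h : o₁ = .sub) : False :=
    EndsIn.not_endsWith_sub ⟨o₂, h ▸ Ne.symm hne, hf₂⟩ (h ▸ hf₁)
  have hdiv₁ (h : o₂ = .div) : False := EndsIn.not_endsWith_div ⟨o₁, h ▸ hne, hf₁⟩ (h ▸ hf₂)
  have hdiv₂ (h : o₁ = .div) : False :=
    EndsIn.not_endsWith_div ⟨o₂, h ▸ Ne.symm hne, hf₂⟩ (h ▸ hf₁)
  have hadd_mul (h₁ : EndsWith f .add) (h₂ : EndsWith f .mul) : False :=
    (h₂.isTerm (.inl rfl)).not_isSplitForm_differential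
      (h₁.isSplitForm_differential (.inl rfl))
  cases o₁ <;> cases o₂ <;> simp_all

end Uniqueness

/-- Every arithmetic expression ends with exactly one of the four
operators `+, −, ×, ÷`; that is, `𝒜 = 𝒜(+) ⊍ 𝒜(−) ⊍ 𝒜(×) ⊍ 𝒜(÷)`. -/
theorem ae_ends_with_exactly_one_op (f : K) : IsAE f ↔ ∃! o : Op, EndsWith f o := by
  constructor
  · intro hf
    obtain ⟨o, ho⟩ := hf.exists_endsWith
    exact ⟨o, ho, fun _ ho' => ho'.unique ho⟩
  · rintro ⟨o, ho, -⟩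
    exact ho.isAE

end
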